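/- If the initial route valuation of the CULO model is formed from link-level valuations, i.e., s^0 = Λᵀ v^0 for some v^0 ∈ ℝ^A, and the CULO iterates converge to a point p̄ ∈ P*, then p̄ is the MEUE strategy, i.e., the unique minimizer of the negative entropy φ over P*. -/

import Mathlib

/-!
Strict monotonicity of `u` forces all equilibria to carry the same link flow `bΛ p`. The valuations
`sᵗ` stay in the range of `Λᵀ`, so `log pᵗ` is of the form `Λᵀ v` plus a vector constant on each OD
pair, and its `q`-weighted pairing with a strategy depends only on the link flow of that strategy.
Hence `φ(p') - φ(p̄) = D(p', pᵗ) - D(p̄, pᵗ)` for every strategy `p'` with the flow of `p̄`. As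
`t → ∞`, the second divergence tends to `0`, while Gibbs' inequality bounds the first one below by a
quantity tending to `0`; thus `p̄` minimizes `φ` among strategies with its flow. These form a convex
set and `φ` is strictly convex, so the minimizer is unique.
-/

open Matrix Filter Finset Topology

noncomputable section

variable {A W K : Type*}

/-- OD-route incidence matrix `Σ`: each column is the standard unit vector at `od k`
(every route `k` serves exactly one OD pair, `od k`). -/
def Sig [DecidableEq W] (od : K → W) : Matrix W K ℝ :=
  Matrix.of fun w k => if od k = w then 1 else 0

/-- The strategy set `P = {p : p ≥ 0, Σ p = 1}`. -/
def Pset [Fintype K] [DecidableEq W] (od : K → W) : Set (K → ℝ) :=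
  {p | (∀ k, 0 ≤ p k) ∧ ∀ w : W, (Sig od).mulVec p w = 1}

/-- `q = Σᵀ d`. -/
def qvec [Fintype W] [DecidableEq W] (od : K → W) (d : W → ℝ) : K → ℝ :=
  (Sig od)ᵀ.mulVec d

/-- `bΛ = Λ · diag q`. -/
def bLam [Fintype K] [Fintype W] [DecidableEq W] [DecidableEq K]
    (Λ : Matrix A K ℝ) (od : K → W) (d : W → ℝ) : Matrix A K ℝ :=
  Λ * Matrix.diagonal (qvec od d)

/-- The link-flow set `X = {bΛ p : p ∈ P}`. -/
def Xset [Fintype K] [Fintype W] [DecidableEq W] [DecidableEq K]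
    (Λ : Matrix A K ℝ) (od : K → W) (d : W → ℝ) : Set (A → ℝ) :=
  (fun p => (bLam Λ od d).mulVec p) '' Pset od

/-- The route-cost map `c(p) = Λᵀ u(bΛ p)`. -/
def routeCost [Fintype A] [Fintype K] [Fintype W] [DecidableEq W] [DecidableEq K]
    (Λ : Matrix A K ℝ) (od : K → W) (d : W → ℝ)
    (u : (A → ℝ) → (A → ℝ)) : (K → ℝ) → (K → ℝ) :=
  fun p => Λᵀ.mulVec (u ((bLam Λ od d).mulVec p))

/-- The UE set `P*`: solutions of the variational inequality. -/
def UEset [Fintype A] [Fintype K] [Fintype W] [DecidableEq W] [DecidableEq K]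
    (Λ : Matrix A K ℝ) (od : K → W) (d : W → ℝ)
    (u : (A → ℝ) → (A → ℝ)) : Set (K → ℝ) :=
  {p | p ∈ Pset od ∧ ∀ p' ∈ Pset od, 0 ≤ routeCost Λ od d u p ⬝ᵥ (p' - p)}

/-- The logit map `q_r`. -/
def logit [Fintype K] [DecidableEq W] (od : K → W) (r : ℝ) (s : K → ℝ) : K → ℝ :=
  fun k => Real.exp (-r * s k) /
    ∑ k' ∈ Finset.univ.filter (fun k' => od k' = od k), Real.exp (-r * s k')

/-- The negative entropy `φ(p) = ∑ₖ qₖ pₖ log pₖ` (with `0·log 0 = 0`). -/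
def negEnt [Fintype K] [Fintype W] [DecidableEq W] (od : K → W) (d : W → ℝ)
    (p : K → ℝ) : ℝ :=
  ∑ k, qvec od d k * (p k * Real.log (p k))

/-- The KL divergence `D(p, p') = ∑ₖ qₖ pₖ (log pₖ − log p'ₖ)` (with `0·log 0 = 0`). -/
def KLdiv [Fintype K] [Fintype W] [DecidableEq W] (od : K → W) (d : W → ℝ)
    (p p' : K → ℝ) : ℝ :=
  ∑ k, qvec od d k * (p k * (Real.log (p k) - Real.log (p' k)))

section Strategies

variable [Fintype K] [DecidableEq W] {od : K → W} {p p' : K → ℝ}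

lemma Sig_mulVec_apply (p : K → ℝ) (w : W) : (Sig od).mulVec p w = ∑ k with od k = w, p k := by
  simp [Sig, mulVec, dotProduct, Finset.sum_filter]

lemma add_weight_mul_sub_mem_Pset {θ : W → ℝ} (hθ : ∀ w, θ w ∈ Set.Icc 0 1)
    (hp : p ∈ Pset od) (hp' : p' ∈ Pset od) :
    (fun k => p k + θ (od k) * (p' k - p k)) ∈ Pset od := by
  refine ⟨fun k => ?_, fun w => ?_⟩
  · have hterm := mul_nonneg (hθ (od k)).1 (hp'.1 k)
    have hterm' := mul_nonneg (sub_nonneg.2 (hθ (od k)).2) (hp.1 k)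
    linarith
  · have hsum := hp.2 w
    have hsum' := hp'.2 w
    rw [Sig_mulVec_apply] at hsum hsum' ⊢
    calc ∑ k with od k = w, (p k + θ (od k) * (p' k - p k))
        = ∑ k with od k = w, (p k + θ w * (p' k - p k)) :=
          Finset.sum_congr rfl fun k hk => by rw [(Finset.mem_filter.1 hk).2]
      _ = 1 := by
          rw [Finset.sum_add_distrib, ← Finset.mul_sum, Finset.sum_sub_distrib, hsum, hsum']
          ring

lemma convex_Pset : Convex ℝ (Pset od) := by
  intro p hp p' hp' a b ha hb hab
  convert add_weight_mul_sub_mem_Pset (θ := fun _ => b) (fun _ => ⟨hb, by linarith⟩) hp hp' using 1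
  ext k
  simp only [Pi.add_apply, Pi.smul_apply, smul_eq_mul]
  linear_combination (p k) * hab

end Strategies

section Demand

variable [Fintype W] [DecidableEq W]

lemma qvec_apply (od : K → W) (d : W → ℝ) (k : K) : qvec od d k = d (od k) := by
  simp [qvec, Sig, mulVec, dotProduct]

lemma qvec_dotProduct_of_mem_Pset [Fintype K] {od : K → W} {p : K → ℝ} (hp : p ∈ Pset od)
    (d : W → ℝ) : qvec od d ⬝ᵥ p = ∑ w, d w := by
  rw [qvec, mulVec_transpose, ← dotProduct_mulVec, funext hp.2]
  exact dotProduct_one d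

lemma transpose_mulVec_dotProduct_qvec_mul [Fintype A] [Fintype K] [DecidableEq K]
    (Λ : Matrix A K ℝ) (od : K → W) (d : W → ℝ) (v : A → ℝ) (x : K → ℝ) :
    Λᵀ.mulVec v ⬝ᵥ (qvec od d * x) = v ⬝ᵥ (bLam Λ od d).mulVec x := by
  have hdiag : qvec od d * x = (diagonal (qvec od d)).mulVec x :=
    funext fun k => (mulVec_diagonal _ _ k).symm
  rw [mulVec_transpose, ← dotProduct_mulVec, bLam, hdiag, mulVec_mulVec]

end Demand

section Equilibrium

variable [Fintype A] [Fintype W] [Fintype K] [DecidableEq W] [DecidableEq K]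
  {Λ : Matrix A K ℝ} {od : K → W} {d : W → ℝ} {u : (A → ℝ) → (A → ℝ)} {p p' : K → ℝ}

/- The weights enter by deviating towards `p'` by a step proportional to the demand of each OD
pair, which is a feasible deviation because `P` is a product over OD pairs. -/
lemma routeCost_dotProduct_qvec_mul_sub_nonneg (hd : ∀ w, 0 ≤ d w)
    (hp : p ∈ UEset Λ od d u) (hp' : p' ∈ Pset od) :
    0 ≤ routeCost Λ od d u p ⬝ᵥ (qvec od d * (p' - p)) := by
  set D := 1 + ∑ w, d w
  have hD : 0 < D := add_pos_of_pos_of_nonneg one_pos (Finset.sum_nonneg fun w _ => hd w)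
  have hle (w : W) : d w ≤ D :=
    (Finset.single_le_sum (fun w _ => hd w) (Finset.mem_univ w)).trans (by simp [D])
  have hdev := hp.2 _ <| add_weight_mul_sub_mem_Pset (θ := fun w => D⁻¹ * d w)
    (fun w => ⟨mul_nonneg (inv_pos.2 hD).le (hd w), (inv_mul_le_one₀ hD).2 (hle w)⟩) hp.1 hp'
  have hstep : (fun k => p k + D⁻¹ * d (od k) * (p' k - p k)) - p
      = D⁻¹ • (qvec od d * (p' - p)) := by
    ext k
    simp [qvec_apply, mul_assoc]
  rw [hstep, dotProduct_smul, smul_eq_mul] at hdev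
  exact nonneg_of_mul_nonneg_right hdev (inv_pos.2 hD)

lemma bLam_mulVec_eq_of_mem_UEset (hd : ∀ w, 0 ≤ d w)
    (hmono : ∀ x ∈ Xset Λ od d, ∀ x' ∈ Xset Λ od d, x ≠ x' → 0 < (u x - u x') ⬝ᵥ (x - x'))
    (hp : p ∈ UEset Λ od d u) (hp' : p' ∈ UEset Λ od d u) :
    (bLam Λ od d).mulVec p = (bLam Λ od d).mulVec p' := by
  by_contra hne
  have hpos := hmono _ ⟨p, hp.1, rfl⟩ _ ⟨p', hp'.1, rfl⟩ hne
  have hdev := routeCost_dotProduct_qvec_mul_sub_nonneg hd hp hp'.1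
  have hdev' := routeCost_dotProduct_qvec_mul_sub_nonneg hd hp' hp.1
  simp only [routeCost, transpose_mulVec_dotProduct_qvec_mul, mulVec_sub, dotProduct_sub]
    at hdev hdev'
  simp only [sub_dotProduct, dotProduct_sub] at hpos
  linarith

end Equilibrium

section Entropy

lemma sub_le_mul_log_sub_log {a b : ℝ} (ha : 0 ≤ a) (hb : 0 < b) :
    a - b ≤ a * (Real.log a - Real.log b) := by
  rcases ha.eq_or_lt with rfl | ha
  · simpa using hb.le
  calc a - b = a * (1 - (a / b)⁻¹) := by field_simp
    _ ≤ a * Real.log (a / b) := by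
        gcongr
        exact Real.one_sub_inv_le_log_of_pos (div_pos ha hb)
    _ = a * (Real.log a - Real.log b) := by rw [Real.log_div ha.ne' hb.ne']

variable [Fintype K] [Fintype W] [DecidableEq W] {od : K → W} {d : W → ℝ} {p p' : K → ℝ}

lemma qvec_dotProduct_sub_le_KLdiv (hd : ∀ w, 0 ≤ d w) (hp : ∀ k, 0 ≤ p k)
    (hp' : ∀ k, 0 < p' k) : qvec od d ⬝ᵥ (p - p') ≤ KLdiv od d p p' := by
  refine Finset.sum_le_sum fun k _ => mul_le_mul_of_nonneg_left ?_ ?_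
  · exact sub_le_mul_log_sub_log (hp k) (hp' k)
  · exact (hd _).trans_eq (qvec_apply od d k).symm

lemma tendsto_KLdiv_nhds_zero {ι : Type*} {l : Filter ι} {x : ι → K → ℝ}
    (hx : Tendsto x l (𝓝 p)) : Tendsto (fun i => KLdiv od d p (x i)) l (𝓝 0) := by
  rw [← Finset.sum_const_zero (s := (Finset.univ : Finset K))]
  refine tendsto_finsetSum _ fun k _ => ?_
  rcases eq_or_ne (p k) 0 with hk | hk
  · simpa [hk] using tendsto_const_nhds
  · simpa using ((((tendsto_pi_nhds.1 hx k).log hk).const_sub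
      (Real.log (p k))).const_mul (p k)).const_mul (qvec od d k)

lemma negEnt_eq_KLdiv_add (p y : K → ℝ) :
    negEnt od d p = KLdiv od d p y + (fun k => Real.log (y k)) ⬝ᵥ (qvec od d * p) := by
  simp only [negEnt, KLdiv, dotProduct, Pi.mul_apply, ← Finset.sum_add_distrib]
  exact Finset.sum_congr rfl fun k _ => by ring

lemma strictConvexOn_negEnt (hd : ∀ w, 0 < d w) :
    StrictConvexOn ℝ (Set.Ici (0 : K → ℝ)) (negEnt od d) := by
  have hq (k : K) : 0 < qvec od d k := (hd _).trans_eq (qvec_apply od d k).symm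
  refine ⟨convex_Ici 0, fun x hx y hy hxy a b ha hb hab => ?_⟩
  obtain ⟨k₀, hk₀⟩ := Function.ne_iff.1 hxy
  have hconvex (k : K) := Real.convexOn_mul_log.2 (hx k) (hy k) ha.le hb.le hab
  have hstrict := Real.strictConvexOn_mul_log.2 (hx k₀) (hy k₀) hk₀ ha hb hab
  calc negEnt od d (a • x + b • y)
      < ∑ k, qvec od d k * (a • (x k * Real.log (x k)) + b • (y k * Real.log (y k))) :=
        Finset.sum_lt_sum (fun k _ => mul_le_mul_of_nonneg_left (hconvex k) (hq k).le)
          ⟨k₀, Finset.mem_univ k₀, mul_lt_mul_of_pos_left hstrict (hq k₀)⟩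
    _ = a • negEnt od d x + b • negEnt od d y := by
        simp only [negEnt, smul_eq_mul, Finset.mul_sum, ← Finset.sum_add_distrib]
        exact Finset.sum_congr rfl fun k _ => by ring

end Entropy

section Logit

/-- The normalizing sum of the logit map over the routes of the OD pair `w`. -/
def logitPartition [Fintype K] [DecidableEq W] (od : K → W) (r : ℝ) (s : K → ℝ) (w : W) : ℝ :=
  ∑ k with od k = w, Real.exp (-r * s k)

section

variable [Fintype K] [DecidableEq W] (od : K → W) (r : ℝ) (s : K → ℝ) (k : K)

lemma logitPartition_pos : 0 < logitPartition od r s (od k) :=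
  Finset.sum_pos (fun _ _ => Real.exp_pos _) ⟨k, by simp⟩

lemma logit_pos : 0 < logit od r s k :=
  div_pos (Real.exp_pos _) (logitPartition_pos od r s k)

lemma log_logit :
    Real.log (logit od r s k) = -r * s k - Real.log (logitPartition od r s (od k)) := by
  have hZ := (logitPartition_pos od r s k).ne'
  rw [logitPartition] at hZ ⊢
  rw [logit, Real.log_div (Real.exp_ne_zero _) hZ, Real.log_exp]

end

variable [Fintype A] [Fintype W] [Fintype K] [DecidableEq W] [DecidableEq K]
  {Λ : Matrix A K ℝ} {od : K → W} {d : W → ℝ} {p p' : K → ℝ} {r : ℝ}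

lemma log_logit_dotProduct_qvec_mul (hp : p ∈ Pset od) (v : A → ℝ) :
    (fun k => Real.log (logit od r (Λᵀ.mulVec v) k)) ⬝ᵥ (qvec od d * p)
      = -r * (v ⬝ᵥ (bLam Λ od d).mulVec p)
        - ∑ w, Real.log (logitPartition od r (Λᵀ.mulVec v) w) * d w := by
  rw [← transpose_mulVec_dotProduct_qvec_mul, ← qvec_dotProduct_of_mem_Pset hp]
  simp only [dotProduct, Finset.mul_sum, ← Finset.sum_sub_distrib]
  refine Finset.sum_congr rfl fun k _ => ?_
  simp only [log_logit, qvec_apply, Pi.mul_apply]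
  ring

variable {ι : Type*} {l : Filter ι} [l.NeBot] {v : ι → A → ℝ}

lemma negEnt_le_of_tendsto_logit (hd : ∀ w, 0 ≤ d w)
    (hlim : Tendsto (fun i => logit od r (Λᵀ.mulVec (v i))) l (𝓝 p))
    (hp : p ∈ Pset od) (hp' : p' ∈ Pset od)
    (hflow : (bLam Λ od d).mulVec p = (bLam Λ od d).mulVec p') :
    negEnt od d p ≤ negEnt od d p' := by
  set x := fun i => logit od r (Λᵀ.mulVec (v i))
  have hgap (i : ι) : negEnt od d p' - negEnt od d p
      = KLdiv od d p' (x i) - KLdiv od d p (x i) := by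
    rw [negEnt_eq_KLdiv_add p' (x i), negEnt_eq_KLdiv_add p (x i),
      log_logit_dotProduct_qvec_mul hp', log_logit_dotProduct_qvec_mul hp, hflow,
      add_sub_add_right_eq_sub]
  have hgibbs (i : ι) : qvec od d ⬝ᵥ (p' - x i) - KLdiv od d p (x i)
      ≤ negEnt od d p' - negEnt od d p :=
    (sub_le_sub_right (qvec_dotProduct_sub_le_KLdiv hd hp'.1 fun k => logit_pos _ _ _ k) _).trans_eq
      (hgap i).symm
  have hzero : qvec od d ⬝ᵥ (p' - p) = 0 := by
    rw [dotProduct_sub, qvec_dotProduct_of_mem_Pset hp', qvec_dotProduct_of_mem_Pset hp, sub_self]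
  have hmass : Tendsto (fun i => qvec od d ⬝ᵥ (p' - x i)) l (𝓝 0) := by
    have hcont : Continuous fun y : K → ℝ => qvec od d ⬝ᵥ (p' - y) := by fun_prop
    exact hzero ▸ (hcont.tendsto p).comp hlim
  have hbound := le_of_tendsto' (hmass.sub (tendsto_KLdiv_nhds_zero hlim)) hgibbs
  rwa [sub_zero, sub_nonneg] at hbound

lemma negEnt_lt_of_tendsto_logit (hd : ∀ w, 0 < d w)
    (hlim : Tendsto (fun i => logit od r (Λᵀ.mulVec (v i))) l (𝓝 p))
    (hp : p ∈ Pset od) (hp' : p' ∈ Pset od)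
    (hflow : (bLam Λ od d).mulVec p = (bLam Λ od d).mulVec p') (hne : p ≠ p') :
    negEnt od d p < negEnt od d p' := by
  have hflow_mid : (bLam Λ od d).mulVec p
      = (bLam Λ od d).mulVec ((1 / 2 : ℝ) • p + (1 / 2 : ℝ) • p') := by
    rw [mulVec_add, mulVec_smul, mulVec_smul, ← hflow, ← add_smul, add_halves, one_smul]
  have hmin := negEnt_le_of_tendsto_logit (fun w => (hd w).le) hlim hp
    (convex_Pset hp hp' one_half_pos.le one_half_pos.le (add_halves 1)) hflow_mid
  have hstrict := (strictConvexOn_negEnt (od := od) hd).2 hp.1 hp'.1 hne one_half_pos one_half_pos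
    (add_halves 1)
  rw [smul_eq_mul, smul_eq_mul] at hstrict
  linarith

end Logit

lemma valuation_mem_range_transpose_mulVec [Fintype A] [Fintype W] [Fintype K] [DecidableEq W]
    [DecidableEq K] {Λ : Matrix A K ℝ} {od : K → W} {d : W → ℝ} {u : (A → ℝ) → (A → ℝ)}
    {η : ℕ → ℝ} {s p : ℕ → K → ℝ} {v0 : A → ℝ} (hs0 : s 0 = Λᵀ.mulVec v0)
    (hsdyn : ∀ t, s (t + 1) = s t + η (t + 1) • routeCost Λ od d u (p t)) (t : ℕ) :
    s t ∈ Set.range Λᵀ.mulVec := by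
  induction t with
  | zero => exact ⟨v0, hs0.symm⟩
  | succ t ih =>
    obtain ⟨v, hv⟩ := ih
    refine ⟨v + η (t + 1) • u ((bLam Λ od d).mulVec (p t)), ?_⟩
    rw [hsdyn, ← hv, mulVec_add, mulVec_smul, routeCost]

theorem statement12_general
    [Fintype A] [Fintype W] [Fintype K] [DecidableEq W] [DecidableEq K]
    (Λ : Matrix A K ℝ) (od : K → W) (d : W → ℝ) (hd : ∀ w, 0 < d w)
    (u : (A → ℝ) → (A → ℝ))
    (hmono : ∀ x ∈ Xset Λ od d, ∀ x' ∈ Xset Λ od d, x ≠ x' →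
      0 < (u x - u x') ⬝ᵥ (x - x'))
    (r : ℝ) (η : ℕ → ℝ) (s : ℕ → K → ℝ) (p : ℕ → K → ℝ)
    (v0 : A → ℝ) (hs0 : s 0 = Λᵀ.mulVec v0)
    (hsdyn : ∀ t, s (t + 1) = s t + η (t + 1) • routeCost Λ od d u (p t))
    (hpdyn : ∀ t, p t = logit od r (s t))
    (pbar : K → ℝ) (hUE : pbar ∈ UEset Λ od d u)
    (hconv : Tendsto p atTop (nhds pbar)) :
    ∀ p' ∈ UEset Λ od d u, p' ≠ pbar → negEnt od d pbar < negEnt od d p' := by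
  intro p' hp' hne
  have hflow := bLam_mulVec_eq_of_mem_UEset (fun w => (hd w).le) hmono hUE hp'
  choose v hv using valuation_mem_range_transpose_mulVec hs0 hsdyn
  have hlogit : p = fun t => logit od r (Λᵀ.mulVec (v t)) :=
    funext fun t => (hpdyn t).trans (congrArg _ (hv t).symm)
  exact negEnt_lt_of_tendsto_logit hd (hlogit ▸ hconv) hUE.1 hp'.1 hflow hne.symm

/-- Proposition 6, MEUE affirmation condition (B): if the initial
route valuation of the CULO model is formed from link-level valuations, i.e.
`s⁰ = Λᵀ v⁰` for some `v⁰ ∈ ℝ^A`, and the iterates converge to `p̄ ∈ P*`, then `p̄` is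
the MEUE strategy, i.e. the unique minimizer of the negative entropy `φ` over `P*`. -/
theorem statement12
    [Fintype A] [Fintype W] [Fintype K] [DecidableEq W] [DecidableEq K]
    (Λ : Matrix A K ℝ) (od : K → W) (d : W → ℝ)
    (hΛ : ∀ a k, Λ a k = 0 ∨ Λ a k = 1)
    (hd : ∀ w, 0 < d w)
    (u : (A → ℝ) → (A → ℝ))
    (hu : ContDiffOn ℝ 1 u (Xset Λ od d))
    (hnonneg : ∀ x ∈ Xset Λ od d, ∀ a, 0 ≤ u x a)
    (hmono : ∀ x ∈ Xset Λ od d, ∀ x' ∈ Xset Λ od d, x ≠ x' →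
      0 < (u x - u x') ⬝ᵥ (x - x'))
    (r : ℝ) (hr : 0 < r)
    (η : ℕ → ℝ) (hη : ∀ t, 0 < η t)
    (s : ℕ → K → ℝ) (p : ℕ → K → ℝ)
    (v0 : A → ℝ) (hs0 : s 0 = Λᵀ.mulVec v0)
    (hsdyn : ∀ t, s (t + 1) = s t + η (t + 1) • routeCost Λ od d u (p t))
    (hpdyn : ∀ t, p t = logit od r (s t))
    (pbar : K → ℝ) (hUE : pbar ∈ UEset Λ od d u)
    (hconv : Tendsto p atTop (nhds pbar)) :
    ∀ p' ∈ UEset Λ od d u, p' ≠ pbar → negEnt od d pbar < negEnt od d p' :=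
  statement12_general Λ od d hd u hmono r η s p v0 hs0 hsdyn hpdyn pbar hUE hconv
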